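/- Let k be a field of odd characteristic p, let A := k[Y]/(Y^{2p} − Y²), and let k be the A-module on which Y acts as 0 (via the augmentation Y ↦ 0). Then for every n ≥ 0 the space Ext^n_A(k,k) is one-dimensional over k, and the Yoneda algebra Ext^•_A(k,k) is isomorphic as a graded k-algebra to the polynomial ring k[u] on one generator u of cohomological degree 1. -/

import Mathlib

open CategoryTheory Polynomial

set_option synthInstance.maxHeartbeats 1000000
set_option maxHeartbeats 4000000

namespace Stmt16

variable (k : Type) [Field k] (p : ℕ) [Fact p.Prime]

/-- the algebra `A = k[Y]/(Y^{2p} - Y²)`, the underlying algebra of the restricted enveloping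
superalgebra of the Lie superalgebra `⟨x, y⟩` with `[y,y] = 2x`, `x^{[p]} = x` -/
def A : Type := Polynomial k ⧸ Ideal.span {(X : Polynomial k) ^ (2 * p) - X ^ 2}

noncomputable instance : CommRing (A k p) :=
  inferInstanceAs (CommRing (Polynomial k ⧸ Ideal.span {(X : Polynomial k) ^ (2 * p) - X ^ 2}))

noncomputable instance : Algebra k (A k p) :=
  inferInstanceAs (Algebra k (Polynomial k ⧸ Ideal.span {(X : Polynomial k) ^ (2 * p) - X ^ 2}))

/-- the augmentation map `A → k`, `Y ↦ 0` -/
noncomputable def aug : A k p →+* k :=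
  Ideal.Quotient.lift _ ((aeval (0 : k)).toRingHom : Polynomial k →+* k) (by
    intro f hf
    rw [Ideal.mem_span_singleton] at hf
    obtain ⟨c, rfl⟩ := hf
    simp [Nat.Prime.ne_zero (Fact.out (p := p.Prime))])

/-- the trivial `A`-module `k`, on which `Y` acts as `0` -/
def Ktriv : Type := k

instance : AddCommGroup (Ktriv k) := inferInstanceAs (AddCommGroup k)

noncomputable instance : Module (A k p) (Ktriv k) :=
  Module.compHom k (aug k p)

/-- the trivial module `k` as an object of the category of `A`-modules -/
noncomputable abbrev Kcat : ModuleCat.{0} (A k p) := ModuleCat.of (A k p) (Ktriv k)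

noncomputable instance : HasDerivedCategory.{1} (ModuleCat.{0} (A k p)) :=
  HasDerivedCategory.standard _

instance : HasExt.{1} (ModuleCat.{0} (A k p)) :=
  CategoryTheory.hasExt_of_hasDerivedCategory _

open Abelian in
lemma Ext_mk₀_add {X Y : ModuleCat.{0} (A k p)} (f g : X ⟶ Y) :
    Ext.mk₀ (f + g) = Ext.mk₀ f + Ext.mk₀ g := by
  apply Ext.ext
  rw [Ext.add_hom, Ext.mk₀_hom, Ext.mk₀_hom, Ext.mk₀_hom, Functor.map_add]
  simp [ShiftedHom.mk₀, Preadditive.add_comp]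

open Abelian in
/-- the `k`-vector space structure on the Ext-groups of `A`-modules, where `c • x` is the
Yoneda composite of `x` with `c • 𝟙` -/
noncomputable instance extModule (X Y : ModuleCat.{0} (A k p)) (N : ℕ) :
    Module k (Ext X Y N) where
  smul c x := (Ext.mk₀ (c • 𝟙 X)).comp x (zero_add N)
  one_smul x := by
    show (Ext.mk₀ ((1 : k) • 𝟙 X)).comp x (zero_add N) = x
    rw [one_smul]
    exact Ext.mk₀_id_comp x
  mul_smul a b x := by
    show (Ext.mk₀ ((a * b) • 𝟙 X)).comp x (zero_add N) =
      (Ext.mk₀ (a • 𝟙 X)).comp ((Ext.mk₀ (b • 𝟙 X)).comp x (zero_add N)) (zero_add N)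
    rw [Ext.mk₀_comp_mk₀_assoc (a • 𝟙 X) (b • 𝟙 X) x]
    congr 2
    simp [smul_smul, mul_comm a b]
  smul_zero a := Ext.comp_zero _ _ _ _ _
  smul_add a x y := Ext.comp_add _ _ _ _
  add_smul a b x := by
    show (Ext.mk₀ ((a + b) • 𝟙 X)).comp x (zero_add N) =
      (Ext.mk₀ (a • 𝟙 X)).comp x (zero_add N) + (Ext.mk₀ (b • 𝟙 X)).comp x (zero_add N)
    rw [add_smul, Ext_mk₀_add, Ext.add_comp]
  zero_smul x := by
    show (Ext.mk₀ ((0 : k) • 𝟙 X)).comp x (zero_add N) = 0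
    rw [zero_smul, Ext.mk₀_zero, Ext.zero_comp]

open Abelian in
/-- the `N`-th Yoneda power of a degree-one extension class -/
noncomputable def upow {X : ModuleCat.{0} (A k p)} (u : Ext X X 1) :
    (N : ℕ) → Ext X X N
  | 0 => Ext.mk₀ (𝟙 X)
  | N + 1 => (upow u N).comp u rfl

/-!
The element `e = 1 - Y ^ (2p - 2)` of `A` kills `Y ^ 2` and maps to `1` in `A / (Y ^ 2) = k[ε]`, so
it splits the quotient map and `k[ε]` is a projective `A`-module. Let `u ∈ Ext¹(k, k)` be the class
of `0 → k → k[ε] → k → 0`. By the long exact sequence, Yoneda multiplication by `u` is bijective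
from `Extⁿ(k, k)` to `Extⁿ⁺¹(k, k)`; for `n = 0`, injectivity holds because every map `k[ε] → k`
vanishes on `ε k[ε]`. Since `Ext⁰(k, k) = k`, the powers of `u` are bases of all Ext groups.
-/

section YonedaPowers

open Abelian

universe w v u

variable {C : Type u} [Category.{v} C] [Abelian C] [HasExt.{w} C]

lemma bijective_precomp_extClass {S : ShortComplex C} (hS : S.ShortExact) [Projective S.X₂] {Z : C}
    (hZ : ∀ g : S.X₂ ⟶ Z, S.f ≫ g = 0) (n : ℕ) :
    Function.Bijective (hS.extClass.precomp Z (add_comm 1 n)) := by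
  refine ⟨(injective_iff_map_eq_zero _).2 fun x hx ↦ ?_, fun x ↦ ?_⟩
  · obtain ⟨y, rfl⟩ := Ext.contravariant_sequence_exact₁ hS Z x (add_comm 1 n) hx
    cases n with
    | zero =>
      obtain ⟨g, rfl⟩ := (Ext.mk₀_bijective _ _).2 y
      rw [Ext.mk₀_comp_mk₀, hZ, Ext.mk₀_zero]
    | succ n => rw [Ext.eq_zero_of_projective y, Ext.comp_zero]
  · exact Ext.contravariant_sequence_exact₃ hS Z x (Ext.eq_zero_of_projective _) (add_comm 1 n)

/-- The `n`-th Yoneda power of a degree-one class in an arbitrary abelian category, defined by the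
same recursion as `upow`, which is its special case for `A`-modules. -/
noncomputable def yonedaPow {X : C} (u : Ext X X 1) : (n : ℕ) → Ext X X n
  | 0 => Ext.mk₀ (𝟙 X)
  | n + 1 => (yonedaPow u n).comp u rfl

lemma yonedaPow_succ' {X : C} (u : Ext X X 1) (n : ℕ) :
    yonedaPow u (n + 1) = u.comp (yonedaPow u n) (add_comm 1 n) := by
  induction n with
  | zero => simp only [yonedaPow, Ext.mk₀_id_comp, Ext.comp_mk₀_id]
  | succ n ih =>
    calc
      yonedaPow u (n + 1 + 1) = (u.comp (yonedaPow u n) (add_comm 1 n)).comp u rfl := by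
        rw [yonedaPow, ih]
      _ = u.comp (yonedaPow u (n + 1)) (add_comm 1 (n + 1)) :=
        Ext.comp_assoc _ _ _ (add_comm 1 n) rfl (by lia)

lemma bijective_smul_yonedaPow {R : Type*} [Ring R] [Linear R C] {X : C} (u : Ext X X 1)
    (hu : ∀ n, Function.Bijective (u.precomp X (add_comm 1 n)))
    (hX : Function.Bijective fun c : R ↦ c • 𝟙 X) (n : ℕ) :
    Function.Bijective fun c : R ↦ c • yonedaPow u n := by
  induction n with
  | zero =>
    simp only [yonedaPow, ← Ext.mk₀_smul]
    exact (Ext.mk₀_bijective X X).comp hX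
  | succ n ih =>
    simp only [yonedaPow_succ', ← Ext.comp_smul]
    exact (hu n).comp ih

end YonedaPowers

section Modules

lemma projective_of_mul_ker_eq_zero {R S : Type*} [CommRing R] [Ring S] [Algebra R S]
    (hsurj : Function.Surjective (algebraMap R S)) {e : R} (he : algebraMap R S e = 1)
    (hker : ∀ r ∈ RingHom.ker (algebraMap R S), e * r = 0) : Module.Projective R S := by
  let splitting : S →ₗ[R] R :=
    (LinearMap.ker (Algebra.linearMap R S)).liftQ (LinearMap.mulLeft R e) hker ∘ₗ
      ((Algebra.linearMap R S).quotKerEquivOfSurjective hsurj).symm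
  refine .of_split splitting (Algebra.linearMap R S) (LinearMap.ext fun s ↦ ?_)
  obtain ⟨r, rfl⟩ := hsurj s
  have splitting_algebraMap : splitting (algebraMap R S r) = e * r :=
    congrArg (Submodule.liftQ _ _ hker)
      (LinearMap.quotKerEquivOfSurjective_symm_apply (Algebra.linearMap R S) hsurj r)
  simp [splitting_algebraMap, he]

lemma bijective_smul_id_of_bijective_smul {F S : Type*} [Field F] [Ring S] [Algebra F S]
    {M : ModuleCat S} (m : M) (hm : Function.Bijective fun c : F ↦ algebraMap F S c • m) :
    Function.Bijective fun c : F ↦ c • 𝟙 M := by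
  refine .of_comp_left (f := fun f : M ⟶ M ↦ f.hom m) hm fun f g hfg ↦ ?_
  ext x
  obtain ⟨c, rfl⟩ := hm.2 x
  simpa only [map_smul] using congrArg (algebraMap F S c • ·) hfg

end Modules

section DualNumbers

variable {R : Type*} [CommRing R]

lemma aeval_eps (f : R[X]) : aeval (DualNumber.eps : DualNumber R) f =
    TrivSqZeroExt.inl (f.coeff 0) + TrivSqZeroExt.inr (f.coeff 1) := by
  have taylor := aeval_add_of_sq_eq_zero f (0 : DualNumber R) DualNumber.eps DualNumber.eps_pow_two
  rw [zero_add] at taylor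
  ext <;> simp [taylor, aeval_def, eval₂_at_zero, coeff_derivative, TrivSqZeroExt.algebraMap_eq_inl]

lemma X_sq_dvd_of_aeval_eps_eq_zero {f : R[X]}
    (hf : aeval (DualNumber.eps : DualNumber R) f = 0) : X ^ 2 ∣ f := by
  rw [aeval_eps] at hf
  have coeff_zero : f.coeff 0 = 0 := by simpa using congrArg TrivSqZeroExt.fst hf
  have coeff_one : f.coeff 1 = 0 := by simpa using congrArg TrivSqZeroExt.snd hf
  refine X_pow_dvd_iff.2 fun d hd ↦ ?_
  interval_cases d <;> assumption

end DualNumbers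

namespace A

/-- The quotient map `k[Y] → A`. -/
noncomputable def mk : k[X] →ₐ[k] A k p := Ideal.Quotient.mkₐ k _

omit [Fact p.Prime] in
lemma mk_surjective : Function.Surjective (mk k p) := Ideal.Quotient.mk_surjective

omit [Fact p.Prime] in
lemma mk_X_pow : mk k p X ^ (2 * p) = mk k p X ^ 2 := by
  rw [← map_pow, ← map_pow]
  exact Ideal.Quotient.eq.2 (Ideal.mem_span_singleton_self _)

/-- `1 - Y ^ (2p - 2)`, the idempotent that projects `A` onto its factor `k[Y] / (Y ^ 2)`. -/
noncomputable def idem : A k p := 1 - mk k p X ^ (2 * p - 2)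

lemma idem_mul_sq : idem k p * mk k p X ^ 2 = 0 := by
  have := (Fact.out : p.Prime).two_le
  rw [idem, sub_mul, one_mul, ← pow_add, show 2 * p - 2 + 2 = 2 * p by lia, mk_X_pow, sub_self]

/-- The algebra map `A → k[ε]`, `Y ↦ ε`, which identifies `k[ε]` with `A / (Y ^ 2)`. -/
noncomputable def toDual : A k p →ₐ[k] DualNumber k :=
  Ideal.Quotient.liftₐ _ (aeval DualNumber.eps) fun f hf ↦ by
    obtain ⟨g, rfl⟩ := Ideal.mem_span_singleton.1 hf
    simp [pow_mul, (Fact.out : p.Prime).ne_zero]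

lemma toDual_mk (f : k[X]) : toDual k p (mk k p f) = aeval DualNumber.eps f := rfl

lemma toDual_mk_X : toDual k p (mk k p X) = DualNumber.eps := aeval_X _

lemma toDual_idem : toDual k p (idem k p) = 1 := by
  have := (Fact.out : p.Prime).two_le
  rw [idem, map_sub, map_one, map_pow, toDual_mk_X, show 2 * p - 2 = 2 + (2 * p - 4) by lia,
    pow_add, DualNumber.eps_pow_two, zero_mul, sub_zero]

lemma toDual_surjective : Function.Surjective (toDual k p) := fun x ↦
  ⟨mk k p (C x.fst + C x.snd * X), by
    rw [toDual_mk]; ext <;> simp [TrivSqZeroExt.algebraMap_eq_inl]⟩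

lemma idem_mul_eq_zero_of_toDual_eq_zero {r : A k p} (hr : toDual k p r = 0) :
    idem k p * r = 0 := by
  obtain ⟨f, rfl⟩ := mk_surjective k p r
  obtain ⟨g, rfl⟩ := X_sq_dvd_of_aeval_eps_eq_zero hr
  rw [map_mul, map_pow, ← mul_assoc, idem_mul_sq, zero_mul]

lemma aug_eq_fst_toDual (r : A k p) : aug k p r = (toDual k p r).fst := by
  obtain ⟨f, rfl⟩ := mk_surjective k p r
  exact aeval_algHom_apply (TrivSqZeroExt.fstHom k k k) DualNumber.eps f

lemma aug_algebraMap (c : k) : aug k p (algebraMap k (A k p) c) = c := by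
  rw [aug_eq_fst_toDual, AlgHom.commutes, TrivSqZeroExt.algebraMap_eq_inl, TrivSqZeroExt.fst_inl]

end A

/-- `k[ε]` as an `A`-algebra on which `Y` acts as `ε`. -/
noncomputable instance : Algebra (A k p) (DualNumber k) := (A.toDual k p).toRingHom.toAlgebra

lemma smul_dualNumber (r : A k p) (x : DualNumber k) : r • x = A.toDual k p r * x := rfl

instance : Module.Projective (A k p) (DualNumber k) :=
  projective_of_mul_ker_eq_zero (A.toDual_surjective k p) (A.toDual_idem k p) fun _ hr ↦
    A.idem_mul_eq_zero_of_toDual_eq_zero k p hr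

/-- The identification of the underlying group of the trivial module with `k`. -/
def Ktriv.equiv : Ktriv k ≃+ k := .refl k

lemma Ktriv.equiv_smul (r : A k p) (c : Ktriv k) :
    Ktriv.equiv k (r • c) = aug k p r * Ktriv.equiv k c := rfl

/-- The inclusion `k → k[ε]`, `c ↦ c ε`, as a map of `A`-modules. -/
noncomputable def socleInclusion : Ktriv k →ₗ[A k p] DualNumber k where
  toFun c := TrivSqZeroExt.inr (Ktriv.equiv k c)
  map_add' a b := by rw [map_add, TrivSqZeroExt.inr_add]
  map_smul' r c := by
    ext <;> simp [smul_dualNumber, Ktriv.equiv_smul, A.aug_eq_fst_toDual, mul_comm]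

/-- The projection `k[ε] → k`, `ε ↦ 0`, as a map of `A`-modules. -/
noncomputable def headProjection : DualNumber k →ₗ[A k p] Ktriv k where
  toFun x := (Ktriv.equiv k).symm x.fst
  map_add' := by simp
  map_smul' r x := (Ktriv.equiv k).injective <| by
    simp [smul_dualNumber, Ktriv.equiv_smul, A.aug_eq_fst_toDual]

/-- The extension `0 → k → k[ε] → k → 0` of `A`-modules. -/
noncomputable def dualNumberExtension : ShortComplex (ModuleCat.{0} (A k p)) where
  X₁ := Kcat k p
  X₂ := ModuleCat.of (A k p) (DualNumber k)
  X₃ := Kcat k p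
  f := ModuleCat.ofHom (socleInclusion k p)
  g := ModuleCat.ofHom (headProjection k p)
  zero := by
    ext c
    simp [socleInclusion, headProjection]

lemma dualNumberExtension_shortExact : (dualNumberExtension k p).ShortExact := by
  apply ModuleCat.shortComplex_shortExact
  · refine fun (x : DualNumber k) ↦ ⟨fun (h : x.fst = 0) ↦ ?_, ?_⟩
    · exact ⟨(Ktriv.equiv k).symm x.snd, TrivSqZeroExt.ext h.symm rfl⟩
    · rintro ⟨c, rfl⟩
      exact TrivSqZeroExt.fst_inr k (Ktriv.equiv k c)
  · exact TrivSqZeroExt.inr_injective.comp (Ktriv.equiv k).injective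
  · exact (Ktriv.equiv k).symm.surjective.comp TrivSqZeroExt.fst_surjective

instance : Projective (dualNumberExtension k p).X₂ :=
  (IsProjective.iff_projective (R := A k p) (DualNumber k)).1 inferInstance

lemma dualNumberExtension_f_comp_eq_zero (g : (dualNumberExtension k p).X₂ ⟶ Kcat k p) :
    (dualNumberExtension k p).f ≫ g = 0 := by
  ext c
  have inclusion_eq_smul : socleInclusion k p c =
      A.mk k p X • (TrivSqZeroExt.inl (Ktriv.equiv k c) : DualNumber k) := by
    ext <;> simp [socleInclusion, smul_dualNumber, A.toDual_mk_X]
  change g.hom (socleInclusion k p c) = 0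
  rw [inclusion_eq_smul]
  refine (map_smul g.hom _ _).trans ((Ktriv.equiv k).injective ?_)
  rw [Ktriv.equiv_smul, A.aug_eq_fst_toDual, A.toDual_mk_X, DualNumber.fst_eps, zero_mul, map_zero]

lemma bijective_smul_id_Kcat : Function.Bijective fun c : k ↦ c • 𝟙 (Kcat k p) :=
  bijective_smul_id_of_bijective_smul ((Ktriv.equiv k).symm 1) <| by
    convert (Ktriv.equiv k).symm.bijective using 2 with c
    apply (Ktriv.equiv k).injective
    simp [Ktriv.equiv_smul, A.aug_algebraMap]

section ExtOfTrivialModule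

open Abelian

omit [Fact p.Prime] in
lemma upow_eq_yonedaPow {M : ModuleCat.{0} (A k p)} (u : Ext M M 1) (n : ℕ) :
    upow k p u n = yonedaPow u n := by
  induction n with
  | zero => rfl
  | succ n ih => rw [upow, yonedaPow, ih]

lemma extModule_eq (M N : ModuleCat.{0} (A k p)) (n : ℕ) :
    extModule k p M N n = Ext.instModule :=
  Module.ext' _ _ fun c x ↦ by
    change (Ext.mk₀ (c • 𝟙 M)).comp x (zero_add n) = _
    rw [Ext.mk₀_smul, Ext.smul_comp, Ext.mk₀_id_comp]

theorem statement16_general :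
    (∀ N : ℕ, Module.finrank k (Ext (Kcat k p) (Kcat k p) N) = 1) ∧
    (∃ u : Ext (Kcat k p) (Kcat k p) 1,
      ∀ N : ℕ, Function.Bijective (fun c : k => c • upow k p u N)) := by
  let u : Ext (Kcat k p) (Kcat k p) 1 := (dualNumberExtension_shortExact k p).extClass
  have hu (n : ℕ) : Function.Bijective fun c : k ↦ c • upow k p u n := by
    rw [upow_eq_yonedaPow, extModule_eq]
    exact bijective_smul_yonedaPow u
      (bijective_precomp_extClass (dualNumberExtension_shortExact k p)
        (dualNumberExtension_f_comp_eq_zero k p))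
      (bijective_smul_id_Kcat k p) n
  refine ⟨fun n ↦ ?_, u, hu⟩
  have upow_ne_zero : upow k p u n ≠ 0 := fun h ↦ one_ne_zero ((hu n).1 (by simp [h]))
  exact finrank_eq_one _ upow_ne_zero (hu n).2

end ExtOfTrivialModule

open Abelian in
/-- Let `k` be a field of odd characteristic `p` and let
`A = k[Y]/(Y^{2p} - Y²)`, with `k` the `A`-module on which `Y` acts as `0`. Then each
`Ext^N_A(k,k)` is one-dimensional over `k`, and the Yoneda algebra `Ext•_A(k,k)` is
isomorphic, as a graded `k`-algebra, to the polynomial ring `k[u]` on one generator `u` of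
cohomological degree `1`: there is a class `u ∈ Ext¹` such that for every `N` the map
`c ↦ c • u^N` is a bijection from `k` onto `Ext^N_A(k,k)`. -/
theorem statement16 (k : Type) [Field k] (p : ℕ) [Fact p.Prime] [CharP k p] (hodd : Odd p) :
    (∀ N : ℕ, Module.finrank k (Ext (Kcat k p) (Kcat k p) N) = 1) ∧
    (∃ u : Ext (Kcat k p) (Kcat k p) 1,
      ∀ N : ℕ, Function.Bijective (fun c : k => c • upow k p u N)) :=
  statement16_general k p

end Stmt16
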